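/- Let E be a complex Banach space, U ⊆ ℂ a nonempty open connected set, and R : U → B(E) an analytic family of operators such that R(λ) is a compact operator for every λ ∈ U, and suppose id + R(λ₀) is injective for some λ₀ ∈ U. Then the function λ ↦ Ring.inverse (id + R(λ)) (i.e., the function equal to (id + R(λ))⁻¹ when id + R(λ) is a unit of B(E) and equal to 0 otherwise) is meromorphic on U. -/

import Mathlib

/-!
Near a point `z₁` the Fredholm alternative yields a finite-rank `F` such that `1 + R z + F` is
invertible; write `G z` for its inverse. Factoring `F = ι ∘ p` through its range `V` gives
`1 + R z = (1 + R z + F) (1 - G z ∘ ι ∘ p)`, and since `1 - a b` and `1 - b a` are invertible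
together, everything is governed by the analytic family `1 - p ∘ G z ∘ ι` on the finite-dimensional
space `V`. Cramer's rule inverts that family meromorphically unless its determinant vanishes
identically near `z₁`. The identity principle on `U` excludes the latter as soon as one operator
`1 + R z₀` is invertible.
-/

open Filter Topology

section FredholmAlternative

variable {𝕜 E F : Type*} [NontriviallyNormedField 𝕜] [NormedAddCommGroup E] [NormedSpace 𝕜 E]
  [NormedAddCommGroup F] [NormedSpace 𝕜 F]

theorem isUnit_one_add_of_injective [CompleteSpace E] {K : E →L[𝕜] E} (hK : IsCompactOperator K)
    (hinj : Function.Injective (1 + K : E →L[𝕜] E)) : IsUnit (1 + K) := by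
  rcases hK.hasEigenvalue_or_mem_resolventSet (μ := (-1 : 𝕜)) (by simp) with hev | hres
  · obtain ⟨v, hv⟩ := hev.exists_hasEigenvector
    have hKv : K v = (-1 : 𝕜) • v := hv.apply_eq_smul
    exact absurd (hinj (a₁ := v) (a₂ := 0) (by simp [hKv])) hv.2
  · rw [spectrum.mem_resolventSet_iff, ← IsUnit.neg_iff] at hres
    simpa [add_comm] using hres

theorem finiteDimensional_ker_one_add [CompleteSpace 𝕜] {K : E →L[𝕜] E}
    (hK : IsCompactOperator K) : FiniteDimensional 𝕜 (1 + K : E →L[𝕜] E).ker := by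
  have hKv : ∀ v ∈ (1 + K : E →L[𝕜] E).ker, K v = -v := fun v hv =>
    (neg_eq_of_add_eq_zero_right (by simpa using hv)).symm
  have hmaps : ∀ v ∈ (1 + K : E →L[𝕜] E).ker,
      (K : E →ₗ[𝕜] E) v ∈ (1 + K : E →L[𝕜] E).ker := fun v hv => by
    rw [ContinuousLinearMap.coe_coe, hKv v hv]
    exact neg_mem hv
  have hcompact :=
    (IsCompactOperator.restrict (f := (K : E →ₗ[𝕜] E)) hK hmaps (1 + K).isClosed_ker).neg
  refine FiniteDimensional.of_isCompactOperator_id (𝕜 := 𝕜) ?_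
  convert! hcompact using 1
  funext v
  exact Subtype.ext (neg_eq_iff_eq_neg.2 (hKv v v.2)).symm

theorem ker_add_smulRight_lt {T : E →L[𝕜] F} {f : E →L[𝕜] 𝕜} {v : E} {y : F} (hy : y ∉ T.range)
    (hv : v ∈ T.ker) (hfv : f v ≠ 0) : (T + f.smulRight y : E →L[𝕜] F).ker < T.ker := by
  have hker : ∀ x ∈ (T + f.smulRight y : E →L[𝕜] F).ker, f x = 0 := by
    intro x hx
    by_contra hfx
    have hTx : T x = -(f x • y) := eq_neg_of_add_eq_zero_left (by simpa using hx)
    exact hy ⟨-(f x)⁻¹ • x, by simp [hTx, smul_smul, hfx]⟩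
  refine lt_of_le_of_ne (fun x hx => ?_) fun heq => hfv (hker v (heq ▸ hv))
  simpa [hker x hx] using hx

theorem finiteDimensional_range_smulRight (f : E →L[𝕜] 𝕜) (y : F) :
    FiniteDimensional 𝕜 (f.smulRight y).range := by
  refine Submodule.finiteDimensional_of_le (S₂ := Submodule.span 𝕜 {y}) ?_
  rintro _ ⟨x, rfl⟩
  exact Submodule.smul_mem _ _ (Submodule.mem_span_singleton_self y)

theorem isCompactOperator_smulRight [LocallyCompactSpace 𝕜] (f : E →L[𝕜] 𝕜) (y : F) :
    IsCompactOperator (f.smulRight y) :=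
  (isCompactOperator_of_locallyCompactSpace_dom f).clm_comp
    (ContinuousLinearMap.toSpanSingleton 𝕜 y)

end FredholmAlternative

section FiniteRankCorrection

variable {𝕜 E F : Type*} [RCLike 𝕜] [NormedAddCommGroup E] [NormedSpace 𝕜 E] [CompleteSpace E]
  [NormedAddCommGroup F] [NormedSpace 𝕜 F] [CompleteSpace F]

theorem hasRightInverse_of_surjective_of_finiteDimensional_ker {T : E →L[𝕜] F}
    [FiniteDimensional 𝕜 T.ker] (hT : Function.Surjective T) : T.HasRightInverse := by
  obtain ⟨P, hP⟩ := Submodule.ClosedComplemented.of_finiteDimensional (𝕜 := 𝕜) T.ker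
  let e := T.equivProdOfSurjectiveOfIsCompl P (LinearMap.range_eq_top.2 hT)
    (LinearMap.range_eq_top.2 fun n => ⟨n, hP n⟩) (LinearMap.isCompl_of_proj hP)
  exact (ContinuousLinearMap.HasRightInverse.fst (R := 𝕜) (F := F) (G := T.ker)).comp
    e.hasRightInverse

-- A right inverse `S` satisfies `S = 1 - K S`, so it is itself an injective compact perturbation
-- of the identity, hence invertible.
theorem injective_one_add_of_surjective {K : E →L[𝕜] E} (hK : IsCompactOperator K)
    (hsurj : Function.Surjective (1 + K : E →L[𝕜] E)) :
    Function.Injective (1 + K : E →L[𝕜] E) := by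
  have := finiteDimensional_ker_one_add hK
  obtain ⟨S, hS⟩ := hasRightInverse_of_surjective_of_finiteDimensional_ker hsurj
  have hKS : S = 1 + -(K * S) := by
    ext y
    exact eq_add_neg_of_add_eq (hS y)
  have hSunit : IsUnit S := by
    have hSinj := hS.injective
    rw [hKS] at hSinj ⊢
    exact isUnit_one_add_of_injective (hK.comp_clm S).neg hSinj
  have hSsurj := (ContinuousLinearMap.isUnit_iff_bijective.1 hSunit).2
  exact (hS.rightInverse_of_surjective hSsurj).injective

theorem exists_finiteDimensional_range_isUnit_one_add_add {K : E →L[𝕜] E}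
    (hK : IsCompactOperator K) :
    ∃ F : E →L[𝕜] E, FiniteDimensional 𝕜 F.range ∧ IsUnit (1 + K + F) := by
  induction hn : Module.finrank 𝕜 (1 + K : E →L[𝕜] E).ker using Nat.strong_induction_on
    generalizing K with
  | h n ih =>
    by_cases hinj : Function.Injective (1 + K : E →L[𝕜] E)
    · refine ⟨0, ?_, by simpa using isUnit_one_add_of_injective hK hinj⟩
      rw [ContinuousLinearMap.toLinearMap_zero, LinearMap.range_zero]
      infer_instance
    have := finiteDimensional_ker_one_add hK
    obtain ⟨y, hy⟩ : ∃ y, y ∉ (1 + K : E →L[𝕜] E).range := by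
      by_contra! hrange
      exact hinj (injective_one_add_of_surjective hK hrange)
    obtain ⟨v, hv, hv0⟩ := Submodule.exists_mem_ne_zero_of_ne_bot
      fun hbot : (1 + K : E →L[𝕜] E).ker = ⊥ => hinj (LinearMap.ker_eq_bot.1 hbot)
    obtain ⟨f, hf⟩ := SeparatingDual.exists_ne_zero (R := 𝕜) hv0
    have hlt := Submodule.finrank_lt_finrank_of_lt (ker_add_smulRight_lt hy hv hf)
    rw [add_assoc, hn] at hlt
    obtain ⟨F, hF, hunit⟩ := ih _ hlt (hK.add (isCompactOperator_smulRight f y)) rfl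
    have := finiteDimensional_range_smulRight f y
    refine ⟨f.smulRight y + F, ?_, by simpa only [add_assoc] using hunit⟩
    exact Submodule.finiteDimensional_of_le (LinearMap.range_add_le _ _)

end FiniteRankCorrection

section OneSubComp

variable {𝕜 E V : Type*} [Ring 𝕜]
  [AddCommGroup E] [Module 𝕜 E] [TopologicalSpace E] [IsTopologicalAddGroup E]
  [AddCommGroup V] [Module 𝕜 V] [TopologicalSpace V] [IsTopologicalAddGroup V]
  {a : V →L[𝕜] E} {b : E →L[𝕜] V}

theorem one_sub_comp_mul_eq_one {s : V →L[𝕜] V} (hs : (1 - b ∘L a) * s = 1) :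
    (1 - a ∘L b) * (1 + a ∘L s ∘L b) = 1 := by
  ext x
  have hsx : a (s (b x)) - a (b (a (s (b x)))) = a (b x) := by
    simpa using congr(a ($hs (b x)))
  simp [← hsx]

theorem mul_one_sub_comp_eq_one {s : V →L[𝕜] V} (hs : s * (1 - b ∘L a) = 1) :
    (1 + a ∘L s ∘L b) * (1 - a ∘L b) = 1 := by
  ext x
  have hsx : a (s (b x)) - a (s (b (a (b x)))) = a (b x) := by
    simpa using congr(a ($hs (b x)))
  simp [hsx]

theorem isUnit_one_sub_comp_swap (h : IsUnit (1 - b ∘L a)) : IsUnit (1 - a ∘L b) :=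
  isUnit_iff_exists.2 ⟨_, one_sub_comp_mul_eq_one (Ring.mul_inverse_cancel _ h),
    mul_one_sub_comp_eq_one (Ring.inverse_mul_cancel _ h)⟩

theorem inverse_one_sub_comp (h : IsUnit (1 - b ∘L a)) :
    Ring.inverse (1 - a ∘L b) = 1 + a ∘L Ring.inverse (1 - b ∘L a) ∘L b := by
  simpa using (Ring.inverse_mul_eq_iff_eq_mul _ 1 _ (isUnit_one_sub_comp_swap h)).2
    (one_sub_comp_mul_eq_one (Ring.mul_inverse_cancel _ h)).symm

end OneSubComp

section CramersRule

open scoped Matrix.Norms.Elementwise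

variable {𝕜 X n V : Type*} [NontriviallyNormedField 𝕜] [NormedAddCommGroup X] [NormedSpace 𝕜 X]
  [Fintype n] [NormedAddCommGroup V] [NormedSpace 𝕜 V] {M : X → Matrix n n 𝕜} {x : X}

theorem analyticAt_matrix_iff :
    AnalyticAt 𝕜 M x ↔ ∀ i j, AnalyticAt 𝕜 (fun z => M z i j) x := by
  rw [← forall_congr' fun i => analyticAt_pi_iff (f := fun j z => M z i j)]
  exact analyticAt_pi_iff (f := fun i z => M z i)

variable [DecidableEq n]

theorem analyticAt_det (hM : AnalyticAt 𝕜 M x) : AnalyticAt 𝕜 (fun z => (M z).det) x := by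
  have hentry := analyticAt_matrix_iff.1 hM
  simp only [Matrix.det_apply']
  fun_prop

theorem analyticAt_adjugate (hM : AnalyticAt 𝕜 M x) :
    AnalyticAt 𝕜 (fun z => (M z).adjugate) x := by
  refine analyticAt_matrix_iff.2 fun i j => ?_
  simp only [Matrix.adjugate_apply]
  refine analyticAt_det (analyticAt_matrix_iff.2 fun k l => ?_)
  by_cases hkj : k = j
  · simpa [Matrix.updateRow_apply, hkj] using analyticAt_const
  · simpa [Matrix.updateRow_apply, hkj] using analyticAt_matrix_iff.1 hM k l

theorem exists_analyticAt_inverse_eq_inv_smul [CompleteSpace 𝕜] [FiniteDimensional 𝕜 V]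
    {T : X → V →L[𝕜] V} (hT : AnalyticAt 𝕜 T x) :
    ∃ (d : X → 𝕜) (N : X → V →L[𝕜] V), AnalyticAt 𝕜 d x ∧ AnalyticAt 𝕜 N x ∧
      ∀ z, (IsUnit (T z) ↔ d z ≠ 0) ∧ Ring.inverse (T z) = (d z)⁻¹ • N z := by
  let e : (V →L[𝕜] V) ≃ₐ[𝕜] Matrix _ _ 𝕜 := (Module.End.toContinuousLinearMap V).symm.trans
    (LinearMap.toMatrixAlgEquiv (Module.finBasis 𝕜 V))
  have he : AnalyticAt 𝕜 (fun z => e (T z)) x :=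
    ((LinearMap.toContinuousLinearMap e.toLinearMap).analyticAt (T x)).comp hT
  refine ⟨fun z => (e (T z)).det, fun z => e.symm (e (T z)).adjugate, analyticAt_det he,
    ((LinearMap.toContinuousLinearMap e.symm.toLinearMap).analyticAt _).comp
      (analyticAt_adjugate he), fun z => ?_⟩
  have hunit : IsUnit (T z) ↔ (e (T z)).det ≠ 0 := by
    rw [← isUnit_iff_ne_zero, ← Matrix.isUnit_iff_isUnit_det]
    exact (MulEquiv.isUnit_map e).symm
  refine ⟨hunit, ?_⟩
  by_cases hz : IsUnit (T z)
  · have hmul : T z * ((e (T z)).det⁻¹ • e.symm (e (T z)).adjugate) = 1 := by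
      apply e.injective
      simp [Matrix.mul_adjugate, smul_smul, hunit.1 hz]
    simpa using (Ring.inverse_mul_eq_iff_eq_mul _ 1 _ hz).2 hmul.symm
  · have hdet := hunit.not_left.1 hz
    simp [Ring.inverse_non_unit _ hz, hdet]

end CramersRule

section LocalMeromorphy

variable {𝕜 E : Type*} [NontriviallyNormedField 𝕜] [NormedAddCommGroup E] [NormedSpace 𝕜 E]

theorem analyticAt_clm_comp {X F G : Type*} [NormedAddCommGroup X] [NormedSpace 𝕜 X]
    [NormedAddCommGroup F] [NormedSpace 𝕜 F] [NormedAddCommGroup G] [NormedSpace 𝕜 G]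
    {S : X → F →L[𝕜] G} {T : X → E →L[𝕜] F} {x : X}
    (hS : AnalyticAt 𝕜 S x) (hT : AnalyticAt 𝕜 T x) : AnalyticAt 𝕜 (fun z => S z ∘L T z) x :=
  ((ContinuousLinearMap.compL 𝕜 E F G).analyticAt_bilinear (S x, T x)).comp₂ hS hT

theorem meromorphicAt_fun_mul {A : Type*} [NormedRing A] [NormedAlgebra 𝕜 A] {f g : 𝕜 → A} {x : 𝕜}
    (hf : MeromorphicAt f x) (hg : MeromorphicAt g x) : MeromorphicAt (fun z => f z * g z) x := by
  obtain ⟨m, hm⟩ := hf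
  obtain ⟨n, hn⟩ := hg
  exact ⟨m + n, by simpa only [pow_add, smul_mul_smul_comm] using hm.fun_mul hn⟩

variable [CompleteSpace 𝕜]

theorem meromorphicAt_inverse_one_sub_comp {V : Type*} [NormedAddCommGroup V] [NormedSpace 𝕜 V]
    [FiniteDimensional 𝕜 V] {a : 𝕜 → V →L[𝕜] E} {b : 𝕜 → E →L[𝕜] V} {x : 𝕜}
    (ha : AnalyticAt 𝕜 a x) (hb : AnalyticAt 𝕜 b x) :
    MeromorphicAt (fun z => Ring.inverse (1 - a z ∘L b z)) x := by
  obtain ⟨d, N, hd, hN, hdN⟩ := exists_analyticAt_inverse_eq_inv_smul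
    (analyticAt_const (v := (1 : V →L[𝕜] V)).fun_sub (analyticAt_clm_comp hb ha))
  rcases hd.eventually_eq_zero_or_eventually_ne_zero with hzero | hne
  · refine (MeromorphicAt.const 0 x).congr ?_
    filter_upwards [hzero.filter_mono nhdsWithin_le_nhds] with z hz
    have hnonunit : ¬ IsUnit (1 - a z ∘L b z) := fun h =>
      (hdN z).1.1 (isUnit_one_sub_comp_swap h) hz
    exact (Ring.inverse_non_unit _ hnonunit).symm
  · have hmer : MeromorphicAt (fun z => 1 + (d z)⁻¹ • (a z ∘L N z ∘L b z)) x :=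
      (MeromorphicAt.const 1 x).fun_add <| hd.meromorphicAt.fun_inv.fun_smul
        (analyticAt_clm_comp ha (analyticAt_clm_comp hN hb)).meromorphicAt
    refine hmer.congr ?_
    filter_upwards [hne] with z hz
    rw [inverse_one_sub_comp ((hdN z).1.2 hz), (hdN z).2, ContinuousLinearMap.smul_comp,
      ContinuousLinearMap.comp_smul]

theorem meromorphicAt_inverse_of_isUnit_add [CompleteSpace E] {A : 𝕜 → E →L[𝕜] E}
    {F : E →L[𝕜] E} [FiniteDimensional 𝕜 F.range] {x : 𝕜} (hA : AnalyticAt 𝕜 A x)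
    (hAF : IsUnit (A x + F)) : MeromorphicAt (fun z => Ring.inverse (A z)) x := by
  let p : E →L[𝕜] F.range := F.rangeRestrict
  let ι : F.range →L[𝕜] E := F.range.subtypeL
  let G : 𝕜 → E →L[𝕜] E := fun z => Ring.inverse (A z + F)
  have hsum : AnalyticAt 𝕜 (fun z => A z + F) x := hA.fun_add analyticAt_const
  have hG : AnalyticAt 𝕜 G x := (analyticAt_inverse (𝕜 := 𝕜) hAF.unit).comp_of_eq hsum rfl
  have hmer : MeromorphicAt (fun z => Ring.inverse (1 - (G z ∘L ι) ∘L p) * G z) x :=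
    meromorphicAt_fun_mul (meromorphicAt_inverse_one_sub_comp
      (analyticAt_clm_comp hG analyticAt_const) analyticAt_const) hG.meromorphicAt
  refine hmer.congr ?_
  have hunit : ∀ᶠ z in 𝓝 x, IsUnit (A z + F) :=
    hsum.continuousAt.eventually_mem (Units.isOpen.mem_nhds hAF)
  filter_upwards [hunit.filter_mono nhdsWithin_le_nhds] with z hz
  have hfactor : (A z + F) * (1 - (G z ∘L ι) ∘L p) = A z := by
    have hιp : (G z ∘L ι) ∘L p = G z * F := rfl
    rw [hιp, mul_sub, mul_one, Ring.mul_inverse_cancel_left _ _ hz, add_sub_cancel_right]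
  rw [← Ring.inverse_mul (.inl hz), hfactor]

end LocalMeromorphy

theorem eventually_isUnit_of_meromorphicOn_inverse {𝕜 A : Type*} [NontriviallyNormedField 𝕜]
    [NormedRing A] [HasSummableGeomSeries A] [NormedSpace 𝕜 A] {U : Set 𝕜} {f : 𝕜 → A} {x y : 𝕜}
    (hmer : MeromorphicOn (fun z => Ring.inverse (f z)) U) (hU : IsPreconnected U)
    (hx : x ∈ U) (hfx : ContinuousAt f x) (hunit : IsUnit (f x)) (hy : y ∈ U) :
    ∀ᶠ z in 𝓝[≠] y, IsUnit (f z) := by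
  nontriviality A
  simp only [Ring.isUnit_iff_inverse_ne_zero]
  rw [← meromorphicOrderAt_ne_top_iff_eventually_ne_zero (hmer y hy)]
  refine hmer.meromorphicOrderAt_ne_top_of_isPreconnected hU hx hy ?_
  rw [meromorphicOrderAt_ne_top_iff_eventually_ne_zero (hmer x hx)]
  have hnear : ∀ᶠ z in 𝓝 x, IsUnit (f z) := hfx.eventually_mem (Units.isOpen.mem_nhds hunit)
  exact (hnear.filter_mono nhdsWithin_le_nhds).mono fun z => Ring.isUnit_iff_inverse_ne_zero.1

theorem analytic_fredholm_meromorphic_general {𝕜 E : Type*} [RCLike 𝕜] [NormedAddCommGroup E]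
    [NormedSpace 𝕜 E] [CompleteSpace E] {U : Set 𝕜} (hU : IsPreconnected U) (R : 𝕜 → E →L[𝕜] E)
    (hRan : AnalyticOnNhd 𝕜 R U) (hRcpt : ∀ z ∈ U, IsCompactOperator (R z))
    (hinj : ∃ z₀ ∈ U, Function.Injective (1 + R z₀ : E →L[𝕜] E)) :
    (∀ z ∈ U, ∀ᶠ w in 𝓝[≠] z, IsUnit (1 + R w)) ∧
      MeromorphicOn (fun z => Ring.inverse (1 + R z)) U := by
  have han : AnalyticOnNhd 𝕜 (fun z => 1 + R z) U := fun z hz =>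
    analyticAt_const.fun_add (hRan z hz)
  have hmer : MeromorphicOn (fun z => Ring.inverse (1 + R z)) U := fun z hz => by
    obtain ⟨F, hF, hunit⟩ := exists_finiteDimensional_range_isUnit_one_add_add (hRcpt z hz)
    exact meromorphicAt_inverse_of_isUnit_add (han z hz) hunit
  obtain ⟨z₀, hz₀, hz₀inj⟩ := hinj
  have hunit := isUnit_one_add_of_injective (hRcpt z₀ hz₀) hz₀inj
  exact ⟨fun z hz => eventually_isUnit_of_meromorphicOn_inverse hmer hU hz₀
    (han z₀ hz₀).continuousAt hunit hz, hmer⟩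

/-- Meromorphy of the inverse family in the analytic Fredholm theorem: if `R` is an
analytic family of compact operators on the Banach space `E` over the nonempty open
connected set `U ⊆ ℂ` and `id + R λ₀` is injective for some `λ₀ ∈ U`, then
`λ ↦ (id + R λ)⁻¹` (interpreted via `Ring.inverse`) is meromorphic on `U`. -/
theorem analytic_fredholm_meromorphic
    {E : Type*} [NormedAddCommGroup E] [NormedSpace ℂ E] [CompleteSpace E]
    {U : Set ℂ} (hUopen : IsOpen U) (hUne : U.Nonempty) (hUconn : IsConnected U)
    (R : ℂ → E →L[ℂ] E) (hRan : AnalyticOnNhd ℂ R U)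
    (hRcpt : ∀ z ∈ U, IsCompactOperator (R z))
    (hinj : ∃ z₀ ∈ U, Function.Injective ((1 + R z₀ : E →L[ℂ] E) : E → E)) :
    MeromorphicOn (fun z => Ring.inverse (1 + R z)) U :=
  (analytic_fredholm_meromorphic_general hUconn.isPreconnected R hRan hRcpt hinj).2
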